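/- Let |ψ⟩ be a state of N = 2L spins whose Schmidt spectrum at every cut α has Renyi entropy bounded as S^α_Renyi ≤ k·(1 + 1/α)·log L + c₀ for some fixed α ∈ (0,1) and constants k, c₀. Fix ε₀ > 0. Then there is a constant C (depending on α, k, c₀, ε₀ but not L) such that choosing bond dimension D_L = ⌈C · L^{2α/(1-α)} · L^{k(1+α)/α}⌉ guarantees the existence of a bond-dimension-D_L MPS |ψ_D⟩ with ‖|ψ⟩ - |ψ_D⟩‖² ≤ ε₀/L. In particular D_L grows only polynomially in L. -/

import Mathlib

noncomputable section

open scoped BigOperators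

/-- Splice a configuration of the first `α` sites with one of the remaining `N - α`
sites into a configuration of all `N` sites. -/
def splice {N d : ℕ} (α : ℕ) (hα : α ≤ N) (x : Fin α → Fin d)
    (r : Fin (N - α) → Fin d) : Fin N → Fin d := fun k =>
  if h : (k : ℕ) < α then x ⟨k, h⟩ else r ⟨(k : ℕ) - α, by omega⟩

/-- The reduced density operator of the first `α` spins of the pure state `ψ`. -/
def reducedDM {N d : ℕ} (ψ : (Fin N → Fin d) → ℂ) (α : ℕ) (hα : α ≤ N) :
    Matrix (Fin α → Fin d) (Fin α → Fin d) ℂ :=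
  Matrix.of fun x y =>
    ∑ r : Fin (N - α) → Fin d, ψ (splice α hα x r) * star (ψ (splice α hα y r))

/-- `φ` is a matrix product state of bond dimension `D` on `N` sites of local
dimension `d`: `φ(i₁,…,i_N) = tr[A^[1]i₁ ⋯ A^[N]i_N]` with `D × D` matrices. -/
def IsMPS {N d : ℕ} (D : ℕ) (φ : (Fin N → Fin d) → ℂ) : Prop :=
  ∃ A : Fin N → Fin d → Matrix (Fin D) (Fin D) ℂ,
    ∀ c : Fin N → Fin d, φ c = ((List.ofFn fun k => A k (c k)).prod).trace

/-!
Compress `ψ` successively, from the last cut to the first, by the projections `P α = U α * (U α)ᴴ`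
onto the `D` leading Schmidt vectors at the cut `α`. Since `ψ - P φ = (ψ - P ψ) + P (ψ - φ)` is an
orthogonal decomposition and `P` is a contraction, each compression adds at most the Schmidt weight
discarded at that cut to the squared error. Expanding the product of the `U α * (U α)ᴴ` gives a
matrix product state with matrices `(U α)ᴴ * U (α + 1)`, where at the two ends `U` is replaced by a
basis vector and by `ψ` itself. For the discarded weight, monotonicity gives
`μ i ^ a ≤ (∑ j, μ j ^ a) / D` for `i ≥ D`; inserted into
`μ i = μ i ^ a * (μ i ^ a) ^ ((1 - a) / a)` it bounds the tail by
`exp ((1 - a) / a * (S - log D))`, with `S` the Rényi entropy of order `a`.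
-/

section Frobenius

open Matrix
open scoped Matrix.Norms.Frobenius

variable {𝕜 m n : Type*} [RCLike 𝕜] [Fintype m] {P : Matrix m m 𝕜}

lemma conjTranspose_sub_mul_mul_eq_zero (hP : IsStarProjection P)
    (X Y : Matrix m n 𝕜) : (X - P * X)ᴴ * (P * Y) = 0 := by
  have hPstar : Pᴴ = P := hP.isSelfAdjoint
  rw [conjTranspose_sub, conjTranspose_mul, hPstar, Matrix.sub_mul, Matrix.mul_assoc,
    ← Matrix.mul_assoc P, hP.isIdempotentElem.eq, sub_self]

variable [Fintype n]

lemma frobenius_norm_sq (A : Matrix m n 𝕜) : ‖A‖ ^ 2 = ∑ i, ∑ j, ‖A i j‖ ^ 2 := by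
  rw [frobenius_norm_def, ← Real.sqrt_eq_rpow, Real.sq_sqrt (by positivity)]
  simp only [Real.rpow_two]

lemma ofReal_frobenius_norm_sq (A : Matrix m n 𝕜) : ((‖A‖ ^ 2 : ℝ) : 𝕜) = (Aᴴ * A).trace := by
  rw [frobenius_norm_sq, Finset.sum_comm]
  simp [trace, mul_apply, RCLike.conj_mul]

lemma frobenius_norm_add_sq_of_conjTranspose_mul_eq_zero {A B : Matrix m n 𝕜} (h : Aᴴ * B = 0) :
    ‖A + B‖ ^ 2 = ‖A‖ ^ 2 + ‖B‖ ^ 2 := by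
  have h' : Bᴴ * A = 0 := by simpa using congrArg conjTranspose h
  apply RCLike.ofReal_injective (K := 𝕜)
  rw [RCLike.ofReal_add]
  simp only [ofReal_frobenius_norm_sq, conjTranspose_add, Matrix.add_mul, Matrix.mul_add, h, h',
    zero_add, add_zero, trace_add]

/- Pythagoras for `M - P * M' = (M - P * M) + P * (M - M')`. -/
lemma frobenius_norm_sub_mul_sq_le (hP : IsStarProjection P) (M M' : Matrix m n 𝕜) :
    ‖M - P * M'‖ ^ 2 ≤ ‖M - P * M‖ ^ 2 + ‖M - M'‖ ^ 2 := by
  have split_error : M - P * M' = (M - P * M) + P * (M - M') := by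
    rw [Matrix.mul_sub]; abel
  have norm_mul_le : ‖P * (M - M')‖ ^ 2 ≤ ‖M - M'‖ ^ 2 := by
    have := frobenius_norm_add_sq_of_conjTranspose_mul_eq_zero
      (conjTranspose_sub_mul_mul_eq_zero hP (M - M') (M - M'))
    rw [sub_add_cancel] at this
    linarith [sq_nonneg ‖(M - M') - P * (M - M')‖]
  rw [split_error, frobenius_norm_add_sq_of_conjTranspose_mul_eq_zero
    (conjTranspose_sub_mul_mul_eq_zero hP M (M - M'))]
  gcongr

lemma ofReal_frobenius_norm_sub_mul_sq [DecidableEq m] (hP : IsStarProjection P)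
    (M : Matrix m n 𝕜) :
    ((‖M - P * M‖ ^ 2 : ℝ) : 𝕜) = ((1 - P) * (M * Mᴴ)).trace := by
  have : (M - P * M)ᴴ * (M - P * M) = Mᴴ * ((1 - P) * M) := by
    rw [Matrix.mul_sub, conjTranspose_sub_mul_mul_eq_zero hP, sub_zero, conjTranspose_sub,
      conjTranspose_mul, show Pᴴ = P from hP.isSelfAdjoint,
      Matrix.sub_mul, Matrix.mul_assoc, Matrix.sub_mul, Matrix.one_mul, Matrix.mul_sub]
  rw [ofReal_frobenius_norm_sq, this, trace_mul_comm, Matrix.mul_assoc]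

end Frobenius

section LeadingEigenvectors

open Matrix Unitary
open scoped Matrix.Norms.Frobenius

variable {𝕜 m n : Type*} [RCLike 𝕜] [Fintype m] [DecidableEq m] [Fintype n]
  {A : Matrix m m 𝕜}

/-- The truncated eigenbasis of a Hermitian matrix: when `g` numbers the eigenvectors injectively,
column `j < D` is the eigenvector numbered `j`, and is zero if there is none. -/
def leadingEigenvectors (hA : A.IsHermitian) (g : m → ℕ) (D : ℕ) : Matrix m (Fin D) 𝕜 :=
  (hA.eigenvectorUnitary : Matrix m m 𝕜) * of fun x (j : Fin D) => if g x = j then (1 : 𝕜) else 0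

variable (hA : A.IsHermitian) {g : m → ℕ} (D : ℕ)

lemma leadingEigenvectors_mul_conjTranspose (hg : g.Injective) :
    leadingEigenvectors hA g D * (leadingEigenvectors hA g D)ᴴ =
      conjStarAlgAut 𝕜 _ hA.eigenvectorUnitary (diagonal fun x => if g x < D then 1 else 0) := by
  have selection_mul_conjTranspose :
      (of fun x (j : Fin D) => if g x = j then (1 : 𝕜) else 0) *
        (of fun x (j : Fin D) => if g x = j then (1 : 𝕜) else 0)ᴴ =
      diagonal fun x => if g x < D then 1 else 0 := by
    ext x y
    by_cases h : g x < D
    · have (j : Fin D) : g x = j ↔ j = ⟨g x, h⟩ := by rw [Fin.ext_iff, eq_comm]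
      simp [mul_apply, this, diagonal_apply, h, hg.eq_iff, @eq_comm _ y, -mul_ite]
    · have (j : Fin D) : g x ≠ j := fun hj => h (hj ▸ j.isLt)
      simp [mul_apply, this, diagonal_apply, h]
  rw [leadingEigenvectors, conjTranspose_mul, Matrix.mul_assoc, ← Matrix.mul_assoc (of _),
    selection_mul_conjTranspose, conjStarAlgAut_apply, Matrix.mul_assoc]
  rfl

lemma isStarProjection_leadingEigenvectors_mul_conjTranspose (hg : g.Injective) :
    IsStarProjection (leadingEigenvectors hA g D * (leadingEigenvectors hA g D)ᴴ) := by
  rw [leadingEigenvectors_mul_conjTranspose hA D hg]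
  refine IsStarProjection.map ⟨?_, ?_⟩ _
  · simp [IsIdempotentElem, diagonal_mul_diagonal]
  · simp [IsSelfAdjoint, star_eq_conjTranspose, diagonal_conjTranspose, Pi.star_def, apply_ite]

lemma frobenius_norm_sub_leadingEigenvectors_sq (hg : g.Injective) {M : Matrix m n 𝕜}
    (hM : M * Mᴴ = A) :
    ‖M - leadingEigenvectors hA g D * (leadingEigenvectors hA g D)ᴴ * M‖ ^ 2 =
      ∑ x with D ≤ g x, hA.eigenvalues x := by
  apply RCLike.ofReal_injective (K := 𝕜)
  rw [ofReal_frobenius_norm_sub_mul_sq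
      (isStarProjection_leadingEigenvectors_mul_conjTranspose hA D hg), hM,
    leadingEigenvectors_mul_conjTranspose hA D hg]
  set φ := conjStarAlgAut 𝕜 (Matrix m m 𝕜) hA.eigenvectorUnitary
  set Δ : Matrix m m 𝕜 := diagonal fun x => if g x < D then 1 else 0
  set Λ : Matrix m m 𝕜 := diagonal (RCLike.ofReal ∘ hA.eigenvalues)
  calc ((1 - φ Δ) * A).trace = (φ ((1 - Δ) * Λ)).trace := by
        rw [map_mul, map_sub, map_one, ← hA.spectral_theorem]
    _ = ((1 - Δ) * Λ).trace := by
        rw [conjStarAlgAut_apply, trace_mul_cycle, coe_star_mul_self, one_mul]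
    _ = _ := by
        rw [← diagonal_one, diagonal_sub, diagonal_mul_diagonal, trace_diagonal,
          Finset.sum_filter, RCLike.ofReal_sum]
        refine Finset.sum_congr rfl fun x _ => ?_
        by_cases h : g x < D <;> simp [h, ← not_lt]

end LeadingEigenvectors

section Renyi

/-- The Rényi entropy of order `a`, with natural logarithm, of a family of nonnegative weights,
not required to sum to one. -/
def renyiEntropy (a : ℝ) (μ : ℕ → ℝ) : ℝ :=
  1 / (1 - a) * Real.log (∑' i, μ i ^ a)

variable {a : ℝ} {μ : ℕ → ℝ}

lemma rpow_le_tsum_rpow_div_of_antitone (ha : 0 ≤ a) (hμ : Antitone μ) (h0 : ∀ i, 0 ≤ μ i)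
    (hsum : Summable fun i => μ i ^ a) {D i : ℕ} (hD : 0 < D) (hi : D ≤ i) :
    μ i ^ a ≤ (∑' j, μ j ^ a) / D := by
  rw [le_div_iff₀ (by positivity), mul_comm]
  calc D * μ i ^ a = ∑ _j ∈ Finset.range D, μ i ^ a := by simp
    _ ≤ ∑ j ∈ Finset.range D, μ j ^ a := by
      refine Finset.sum_le_sum fun j hj => Real.rpow_le_rpow (h0 i) (hμ ?_) ha
      exact (Finset.mem_range.mp hj).le.trans hi
    _ ≤ ∑' j, μ j ^ a := hsum.sum_le_tsum _ fun j _ => Real.rpow_nonneg (h0 j) a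

lemma sum_tail_le_tsum_rpow_mul (ha0 : 0 < a) (ha1 : a ≤ 1) (hμ : Antitone μ) (h0 : ∀ i, 0 ≤ μ i)
    (hsum : Summable fun i => μ i ^ a) {D : ℕ} (hD : 0 < D) {s : Finset ℕ} (hs : ∀ i ∈ s, D ≤ i) :
    ∑ i ∈ s, μ i ≤ (∑' i, μ i ^ a) * ((∑' i, μ i ^ a) / D) ^ ((1 - a) / a) := by
  have : 0 ≤ (1 - a) / a := div_nonneg (sub_nonneg.mpr ha1) ha0.le
  have rpow_nonneg (i : ℕ) : 0 ≤ μ i ^ a := Real.rpow_nonneg (h0 i) a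
  have factor (i : ℕ) : μ i = μ i ^ a * (μ i ^ a) ^ ((1 - a) / a) := by
    have : a + a * ((1 - a) / a) = 1 := by field_simp; ring
    rw [← Real.rpow_mul (h0 i), ← Real.rpow_add' (h0 i) (by simp [this]), this, Real.rpow_one]
  calc ∑ i ∈ s, μ i ≤ ∑ i ∈ s, μ i ^ a * ((∑' i, μ i ^ a) / D) ^ ((1 - a) / a) := by
        refine Finset.sum_le_sum fun i hi => (factor i).trans_le ?_
        gcongr
        · exact rpow_nonneg i
        · exact rpow_nonneg i
        · exact rpow_le_tsum_rpow_div_of_antitone ha0.le hμ h0 hsum hD (hs i hi)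
    _ = (∑ i ∈ s, μ i ^ a) * ((∑' i, μ i ^ a) / D) ^ ((1 - a) / a) := by rw [Finset.sum_mul]
    _ ≤ _ := by
        have : 0 ≤ ∑' i, μ i ^ a := tsum_nonneg rpow_nonneg
        gcongr
        exact hsum.sum_le_tsum s fun i _ => rpow_nonneg i

lemma sum_tail_le_exp_renyiEntropy (ha0 : 0 < a) (ha1 : a < 1) (hμ : Antitone μ)
    (h0 : ∀ i, 0 ≤ μ i) (hsum : Summable fun i => μ i ^ a) {D : ℕ} (hD : 0 < D)
    {s : Finset ℕ} (hs : ∀ i ∈ s, D ≤ i) :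
    ∑ i ∈ s, μ i ≤ Real.exp ((1 - a) / a * (renyiEntropy a μ - Real.log D)) := by
  refine (sum_tail_le_tsum_rpow_mul ha0 ha1.le hμ h0 hsum hD hs).trans ?_
  rw [renyiEntropy]
  set S := ∑' i, μ i ^ a
  have hS : 0 ≤ S := tsum_nonneg fun i => Real.rpow_nonneg (h0 i) a
  rcases hS.eq_or_lt with hS | hS
  · simp only [← hS, zero_mul]
    positivity
  · have hD' : (0 : ℝ) < D := by exact_mod_cast hD
    have h1a : 1 - a ≠ 0 := by linarith
    rw [Real.rpow_def_of_pos (by positivity), Real.log_div hS.ne' hD'.ne']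
    nth_rw 1 [← Real.exp_log hS]
    rw [← Real.exp_add]
    apply le_of_eq
    congr 1
    field_simp
    ring

end Renyi

section Bipartition

open Matrix
open scoped Matrix.Norms.Frobenius

variable {N d : ℕ} {α : ℕ}

lemma splice_comp_castLE (hα : α ≤ N) (x : Fin α → Fin d) (r : Fin (N - α) → Fin d) :
    splice α hα x r ∘ Fin.castLE hα = x := by
  funext k
  simp [splice]

lemma splice_comp_castLE_succ (hα : α < N) (x : Fin α → Fin d) (r : Fin (N - α) → Fin d) :
    splice α hα.le x r ∘ Fin.castLE (Nat.succ_le_of_lt hα) =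
      Fin.snoc (α := fun _ => Fin d) x (r ⟨0, Nat.sub_pos_of_lt hα⟩) := by
  funext k
  refine Fin.lastCases ?_ (fun k => ?_) k <;> simp [splice]

/-- Configurations of `N` sites as pairs of configurations of the two blocks at the cut `α`. -/
def spliceEquiv (α : ℕ) (hα : α ≤ N) :
    (Fin α → Fin d) × (Fin (N - α) → Fin d) ≃ (Fin N → Fin d) where
  toFun p := splice α hα p.1 p.2
  invFun c := (c ∘ Fin.castLE hα, fun j => c ⟨α + j, by omega⟩)
  left_inv p := Prod.ext (splice_comp_castLE hα p.1 p.2) (by funext j; simp [splice])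
  right_inv c := by
    funext k
    by_cases hk : (k : ℕ) < α
    · simp [splice, hk]
    · have : α + (k - α : ℕ) = k := by omega
      simp [splice, hk, this]

/-- The coefficients of a state as a matrix indexed by the configurations of the first `α` sites
and of the remaining ones; its squared singular values are the Schmidt weights at the cut `α`. -/
def cutMatrix (α : ℕ) (hα : α ≤ N) (ψ : (Fin N → Fin d) → ℂ) :
    Matrix (Fin α → Fin d) (Fin (N - α) → Fin d) ℂ :=
  of fun x r => ψ (splice α hα x r)

lemma cutMatrix_mul_conjTranspose (hα : α ≤ N) (ψ : (Fin N → Fin d) → ℂ) :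
    cutMatrix α hα ψ * (cutMatrix α hα ψ)ᴴ = reducedDM ψ α hα := rfl

lemma isHermitian_reducedDM (ψ : (Fin N → Fin d) → ℂ) (hα : α ≤ N) :
    (reducedDM ψ α hα).IsHermitian := by
  rw [← cutMatrix_mul_conjTranspose]
  exact isHermitian_mul_conjTranspose_self _

lemma norm_cutMatrix_sub_sq (hα : α ≤ N) (ψ φ : (Fin N → Fin d) → ℂ) :
    ‖cutMatrix α hα ψ - cutMatrix α hα φ‖ ^ 2 = ∑ c, Complex.normSq (ψ c - φ c) := by
  rw [frobenius_norm_sq, ← (spliceEquiv α hα).sum_comp, Fintype.sum_prod_type]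
  simp only [Complex.normSq_eq_norm_sq]
  rfl

end Bipartition

section MatrixProduct

open Matrix
open scoped Matrix.Norms.Frobenius

variable {N d D : ℕ}

/-- The tensor at site `α` of the matrix product obtained by compressing the first `α` sites with
`U α` and the first `α + 1` sites with `U (α + 1)`. -/
def transferMatrix (U : ∀ α, Matrix (Fin α → Fin d) (Fin D) ℂ) (α : ℕ) (s : Fin d) :
    Matrix (Fin D) (Fin D) ℂ :=
  (U α)ᴴ * (U (α + 1)).submatrix (fun x => Fin.snoc (α := fun _ => Fin d) x s) id

/-- The product of the transfer matrices of the sites from `α` on, for the configuration `c`. -/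
def transferProd (U : ∀ α, Matrix (Fin α → Fin d) (Fin D) ℂ) (α : ℕ) (c : Fin N → Fin d) :
    Matrix (Fin D) (Fin D) ℂ :=
  ((List.ofFn fun k : Fin N => transferMatrix U k (c k)).drop α).prod

/-- The state whose first `α` sites are expanded in the columns of `U α` and whose remaining sites
are a matrix product, closed on the right by the basis vector `0`. -/
def partialMPS [NeZero D] (U : ∀ α, Matrix (Fin α → Fin d) (Fin D) ℂ) (α : ℕ) (hα : α ≤ N) :
    (Fin N → Fin d) → ℂ :=
  fun c => (U α * transferProd U α c) (c ∘ Fin.castLE hα) 0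

variable {U : ∀ α, Matrix (Fin α → Fin d) (Fin D) ℂ} {α : ℕ}

lemma transferProd_of_lt (hα : α < N) (c : Fin N → Fin d) :
    transferProd U α c = transferMatrix U α (c ⟨α, hα⟩) * transferProd U (α + 1) c := by
  rw [transferProd, List.drop_eq_getElem_cons (by simpa using hα), List.prod_cons]
  simp [transferProd]

lemma transferProd_self (c : Fin N → Fin d) : transferProd U N c = 1 := by
  rw [transferProd, List.drop_of_length_le (by simp), List.prod_nil]

lemma transferProd_congr {c c' : Fin N → Fin d} (h : ∀ k : Fin N, α ≤ k → c k = c' k) :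
    transferProd U α c = transferProd U α c' := by
  unfold transferProd
  congr 1
  refine List.ext_getElem (by simp) fun i hi _ => ?_
  simp only [List.getElem_drop, List.getElem_ofFn]
  rw [h _ (by simp)]

variable [NeZero D]

lemma cutMatrix_partialMPS (hα : α < N) :
    cutMatrix α hα.le (partialMPS U α hα.le) =
      U α * (U α)ᴴ * cutMatrix α hα.le (partialMPS U (α + 1) hα) := by
  ext x r
  set s := r ⟨0, Nat.sub_pos_of_lt hα⟩
  set V := (U (α + 1)).submatrix (fun y => Fin.snoc (α := fun _ => Fin d) y s) id
  have right_eq (y : Fin α → Fin d) : cutMatrix α hα.le (partialMPS U (α + 1) hα) y r =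
      (V * transferProd U (α + 1) (splice α hα.le x r)) y 0 := by
    have tail_eq : transferProd U (α + 1) (splice α hα.le y r) =
        transferProd U (α + 1) (splice α hα.le x r) :=
      transferProd_congr fun k hk => by simp [splice, show ¬ (k : ℕ) < α by omega]
    simp only [cutMatrix, of_apply, partialMPS, splice_comp_castLE_succ hα, tail_eq]
    rfl
  calc cutMatrix α hα.le (partialMPS U α hα.le) x r
      = (U α * transferProd U α (splice α hα.le x r)) x 0 := by
        simp only [cutMatrix, of_apply, partialMPS, splice_comp_castLE]
    _ = (U α * (U α)ᴴ * (V * transferProd U (α + 1) (splice α hα.le x r))) x 0 := by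
        have : splice α hα.le x r ⟨α, hα⟩ = s := by simp [splice, s]
        rw [transferProd_of_lt hα, this, transferMatrix]
        simp only [Matrix.mul_assoc, V]
    _ = (U α * (U α)ᴴ * cutMatrix α hα.le (partialMPS U (α + 1) hα)) x r := by
        simp only [mul_apply (M := U α * (U α)ᴴ), right_eq]

lemma sum_normSq_sub_partialMPS_le (hα : α < N) (hU : IsStarProjection (U α * (U α)ᴴ))
    (ψ : (Fin N → Fin d) → ℂ) :
    ∑ c, Complex.normSq (ψ c - partialMPS U α hα.le c) ≤
      ‖cutMatrix α hα.le ψ - U α * (U α)ᴴ * cutMatrix α hα.le ψ‖ ^ 2 +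
        ∑ c, Complex.normSq (ψ c - partialMPS U (α + 1) hα c) := by
  rw [← norm_cutMatrix_sub_sq hα.le, ← norm_cutMatrix_sub_sq hα.le, cutMatrix_partialMPS]
  exact frobenius_norm_sub_mul_sq_le hU _ _

lemma partialMPS_self {ψ : (Fin N → Fin d) → ℂ} (hU : U N = of fun c => Pi.single 0 (ψ c)) :
    partialMPS U N le_rfl = ψ := by
  funext c
  simp [partialMPS, transferProd_self, hU]

lemma isMPS_partialMPS_zero (hN : 0 < N) (hU : U 0 = of fun _ => Pi.single 0 1) :
    IsMPS D (partialMPS U 0 N.zero_le : (Fin N → Fin d) → ℂ) := by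
  refine ⟨fun k s => transferMatrix U k s, fun c => ?_⟩
  have diag_eq_zero (i : Fin D) (hi : i ≠ 0) : transferProd U 0 c i i = 0 := by
    simp [transferProd_of_lt hN, transferMatrix, hU, mul_apply, hi]
  calc partialMPS U 0 N.zero_le c = transferProd U 0 c 0 0 := by
        simp [partialMPS, hU, mul_apply, Pi.single_apply]
    _ = (transferProd U 0 c).trace := by
        exact (Finset.sum_eq_single 0 (fun i _ hi => diag_eq_zero i hi) (by simp)).symm
    _ = _ := by rw [transferProd, List.drop_zero]

theorem exists_isMPS_of_isStarProjection (hN : 0 < N) (ψ : (Fin N → Fin d) → ℂ) (ε : ℕ → ℝ)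
    (h : ∀ α, 0 < α → ∀ hα : α < N, ∃ U : Matrix (Fin α → Fin d) (Fin D) ℂ,
      IsStarProjection (U * Uᴴ) ∧
        ‖cutMatrix α hα.le ψ - U * Uᴴ * cutMatrix α hα.le ψ‖ ^ 2 ≤ ε α) :
    ∃ φ : (Fin N → Fin d) → ℂ, IsMPS D φ ∧
      ∑ c, Complex.normSq (ψ c - φ c) ≤ ∑ α ∈ Finset.Ico 1 N, ε α := by
  choose! V hVproj hVε using h
  obtain ⟨U, hU0, hUN, hU⟩ : ∃ U : ∀ α, Matrix (Fin α → Fin d) (Fin D) ℂ,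
      U 0 = of (fun _ => Pi.single 0 1) ∧ U N = of (fun c => Pi.single 0 (ψ c)) ∧
        ∀ α, 0 < α → α < N → U α = V α :=
    ⟨Function.update (Function.update V 0 (of fun _ => Pi.single 0 1)) N
        (of fun c => Pi.single 0 (ψ c)),
      by simp [hN.ne], by simp, fun α h0 hα => by simp [h0.ne', hα.ne]⟩
  have error_le (α : ℕ) (hα : α ≤ N) (h1 : 1 ≤ α) :
      ∑ c, Complex.normSq (ψ c - partialMPS U α hα c) ≤ ∑ β ∈ Finset.Ico α N, ε β := by
    induction hα using Nat.decreasingInduction with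
    | self => simp [partialMPS_self hUN]
    | of_succ α hα ih =>
      have step := sum_normSq_sub_partialMPS_le (U := U) hα (hU α h1 hα ▸ hVproj α h1 hα) ψ
      rw [hU α h1 hα] at step
      rw [Finset.sum_eq_sum_Ico_succ_bot hα]
      linarith [hVε α h1 hα, ih (by omega)]
  have hU0_one : U 0 * (U 0)ᴴ = 1 := by
    ext x y
    obtain rfl := Subsingleton.elim x y
    simp [hU0, mul_apply, Pi.single_apply]
  refine ⟨partialMPS U 0 N.zero_le, isMPS_partialMPS_zero hN hU0, ?_⟩
  have hproj : IsStarProjection (U 0 * (U 0)ᴴ) := hU0_one ▸ .one _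
  calc ∑ c, Complex.normSq (ψ c - partialMPS U 0 N.zero_le c)
      ≤ ∑ c, Complex.normSq (ψ c - partialMPS U 1 hN c) := by
        simpa [hU0_one] using sum_normSq_sub_partialMPS_le hN hproj ψ
    _ ≤ ∑ α ∈ Finset.Ico 1 N, ε α := error_le 1 hN le_rfl

end MatrixProduct

section SchmidtSpectrum

open Matrix
open scoped Matrix.Norms.Frobenius

variable {N d α : ℕ} {a : ℝ}

/-- `μ` lists the Schmidt weights of `ψ` at the cut `α`: the eigenvalues of the reduced density
operator with multiplicity, in decreasing order and padded with zeros. -/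
def IsSchmidtSpectrum (ψ : (Fin N → Fin d) → ℂ) (α : ℕ) (hα : α ≤ N) (μ : ℕ → ℝ) : Prop :=
  Antitone μ ∧ (∀ i, 0 ≤ μ i) ∧
    ∃ g : (Fin α → Fin d) → ℕ, Function.Injective g ∧
      (∀ x, μ (g x) = (isHermitian_reducedDM ψ hα).eigenvalues x) ∧
      ∀ i, i ∉ Set.range g → μ i = 0

lemma IsSchmidtSpectrum.exists_truncation {ψ : (Fin N → Fin d) → ℂ} {hα : α ≤ N} {μ : ℕ → ℝ}
    (hμ : IsSchmidtSpectrum ψ α hα μ) (ha0 : 0 < a) (ha1 : a < 1) {D : ℕ} (hD : 0 < D) :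
    ∃ U : Matrix (Fin α → Fin d) (Fin D) ℂ, IsStarProjection (U * Uᴴ) ∧
      ‖cutMatrix α hα ψ - U * Uᴴ * cutMatrix α hα ψ‖ ^ 2 ≤
        Real.exp ((1 - a) / a * (renyiEntropy a μ - Real.log D)) := by
  obtain ⟨hanti, h0, g, hg, heig, hzero⟩ := hμ
  have hsum : Summable fun i => μ i ^ a := by
    refine summable_of_hasFiniteSupport ((Set.finite_range g).subset fun i hi => ?_)
    contrapose! hi
    simp [hzero i hi, ha0.ne']
  refine ⟨leadingEigenvectors (isHermitian_reducedDM ψ hα) g D,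
    isStarProjection_leadingEigenvectors_mul_conjTranspose _ D hg, ?_⟩
  rw [frobenius_norm_sub_leadingEigenvectors_sq _ D hg (cutMatrix_mul_conjTranspose hα ψ)]
  calc ∑ x with D ≤ g x, (isHermitian_reducedDM ψ hα).eigenvalues x
      = ∑ i ∈ (Finset.univ.filter fun x => D ≤ g x).map ⟨g, hg⟩, μ i := by
        simp [heig]
    _ ≤ _ := sum_tail_le_exp_renyiEntropy ha0 ha1 hanti h0 hsum hD (by simp)

theorem exists_isMPS_of_isSchmidtSpectrum (hN : 0 < N) (ψ : (Fin N → Fin d) → ℂ) {μ : ℕ → ℕ → ℝ}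
    (hμ : ∀ α, 0 < α → ∀ hα : α < N, IsSchmidtSpectrum ψ α hα.le (μ α))
    (ha0 : 0 < a) (ha1 : a < 1) {D : ℕ} (hD : 0 < D) :
    ∃ φ : (Fin N → Fin d) → ℂ, IsMPS D φ ∧ ∑ c, Complex.normSq (ψ c - φ c) ≤
      ∑ α ∈ Finset.Ico 1 N, Real.exp ((1 - a) / a * (renyiEntropy a (μ α) - Real.log D)) :=
  have : NeZero D := ⟨hD.ne'⟩
  exists_isMPS_of_isStarProjection hN ψ _ fun α h0 hα =>
    (hμ α h0 hα).exists_truncation ha0 ha1 hD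

end SchmidtSpectrum

section LogarithmicScaling

lemma exp_mul_sub_log_le {a k c₀ ε₀ S L D : ℝ} (ha0 : 0 < a) (ha1 : a < 1) (hε₀ : 0 < ε₀)
    (hL : 0 < L) (hS : S ≤ k * (1 + 1 / a) * Real.log L + c₀)
    (hD : Real.exp c₀ * (2 / ε₀) ^ (a / (1 - a)) * L ^ (2 * a / (1 - a)) *
      L ^ (k * (1 + a) / a) ≤ D) :
    Real.exp ((1 - a) / a * (S - Real.log D)) ≤ ε₀ / (2 * L ^ 2) := by
  have h1a : 0 < 1 - a := sub_pos.mpr ha1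
  have log_D_ge : c₀ + a / (1 - a) * Real.log (2 / ε₀) + 2 * a / (1 - a) * Real.log L +
      k * (1 + a) / a * Real.log L ≤ Real.log D := by
    refine Eq.trans_le ?_ (Real.log_le_log (by positivity) hD)
    rw [Real.log_mul (by positivity) (by positivity), Real.log_mul (by positivity) (by positivity),
      Real.log_mul (by positivity) (by positivity), Real.log_exp, Real.log_rpow (by positivity),
      Real.log_rpow hL, Real.log_rpow hL]
  have log_target : Real.log (ε₀ / (2 * L ^ 2)) = -(Real.log (2 / ε₀) + 2 * Real.log L) := by
    rw [show ε₀ / (2 * L ^ 2) = (2 / ε₀ * L ^ 2)⁻¹ by field_simp, Real.log_inv,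
      Real.log_mul (by positivity) (by positivity), Real.log_pow, Nat.cast_ofNat]
  rw [← Real.le_log_iff_exp_le (by positivity), log_target]
  calc (1 - a) / a * (S - Real.log D)
      ≤ (1 - a) / a * -(a / (1 - a) * (Real.log (2 / ε₀) + 2 * Real.log L)) := by
        gcongr
        have : k * (1 + 1 / a) = k * (1 + a) / a := by field_simp; ring
        rw [this] at hS
        linear_combination hS + log_D_ge
    _ = _ := by field_simp

theorem mps_polynomial_bond_dimension_general {a : ℝ} (ha0 : 0 < a) (ha1 : a < 1) (c₀ : ℝ) {ε₀ : ℝ}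
    (hε₀ : 0 < ε₀) :
    ∃ C : ℝ, 0 < C ∧
      ∀ (k : ℝ) (d L : ℕ), 1 ≤ L → ∀ (ψ : (Fin (2 * L) → Fin d) → ℂ) (μ : ℕ → ℕ → ℝ),
        (∀ α, 0 < α → ∀ hα : α < 2 * L, IsSchmidtSpectrum ψ α hα.le (μ α)) →
        (∀ α, 0 < α → α < 2 * L →
          renyiEntropy a (μ α) ≤ k * (1 + 1 / a) * Real.log L + c₀) →
        ∃ ψD : (Fin (2 * L) → Fin d) → ℂ,
          IsMPS (⌈C * (L : ℝ) ^ (2 * a / (1 - a)) * (L : ℝ) ^ (k * (1 + a) / a)⌉₊) ψD ∧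
            ∑ c, Complex.normSq (ψ c - ψD c) ≤ ε₀ / L := by
  refine ⟨Real.exp c₀ * (2 / ε₀) ^ (a / (1 - a)), by positivity, fun k d L hL ψ μ hμ hS => ?_⟩
  set D := ⌈Real.exp c₀ * (2 / ε₀) ^ (a / (1 - a)) * (L : ℝ) ^ (2 * a / (1 - a)) *
    (L : ℝ) ^ (k * (1 + a) / a)⌉₊
  have hL0 : (0 : ℝ) < L := by exact_mod_cast hL
  have hD : 0 < D := Nat.ceil_pos.mpr (by positivity)
  obtain ⟨φ, hφ, hle⟩ := exists_isMPS_of_isSchmidtSpectrum (by omega) ψ hμ ha0 ha1 hD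
  refine ⟨φ, hφ, hle.trans ?_⟩
  calc ∑ α ∈ Finset.Ico 1 (2 * L), Real.exp ((1 - a) / a * (renyiEntropy a (μ α) - Real.log D))
      ≤ ∑ α ∈ Finset.Ico 1 (2 * L), ε₀ / (2 * (L : ℝ) ^ 2) := by
        refine Finset.sum_le_sum fun α hα => ?_
        obtain ⟨h0, hα⟩ := Finset.mem_Ico.mp hα
        exact exp_mul_sub_log_le ha0 ha1 hε₀ hL0 (hS α h0 hα) (Nat.le_ceil _)
    _ = (2 * L - 1 : ℕ) * (ε₀ / (2 * (L : ℝ) ^ 2)) := by simp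
    _ ≤ (2 * L : ℕ) * (ε₀ / (2 * (L : ℝ) ^ 2)) := by gcongr; omega
    _ = ε₀ / L := by push_cast; field_simp

end LogarithmicScaling

/-- **Polynomial bond dimension suffices under logarithmic entropy scaling.** Fix
`a ∈ (0,1)`, `k`, `c₀` and `ε₀ > 0`. There is a constant `C > 0` (independent of `L`)
such that: for every normalized state `ψ` of `N = 2L` spins whose sorted Schmidt
spectrum `μ α` at each cut `α` has Renyi entropy
`S^a(μ α) = (1/(1-a)) log Σ_i (μ α i)^a ≤ k (1 + 1/a) log L + c₀`, the bond dimension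
`D_L = ⌈C · L^(2a/(1-a)) · L^(k(1+a)/a)⌉` admits an MPS `ψD` with
`‖ψ - ψD‖² ≤ ε₀ / L`. In particular `D_L` grows only polynomially in `L`. -/
theorem mps_polynomial_bond_dimension (a k c₀ ε₀ : ℝ)
    (ha0 : 0 < a) (ha1 : a < 1) (hε₀ : 0 < ε₀) (d : ℕ) (hd : 1 ≤ d) :
    ∃ C : ℝ, 0 < C ∧
      ∀ (L : ℕ), 1 ≤ L →
      ∀ (ψ : (Fin (2 * L) → Fin d) → ℂ),
        (∑ c, Complex.normSq (ψ c) = 1) →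
        ∀ (hH : ∀ (α : ℕ) (hα : α ≤ 2 * L), (reducedDM ψ α hα).IsHermitian)
          (μ : ℕ → ℕ → ℝ),
          (∀ α : ℕ, ∀ hα : 1 ≤ α ∧ α ≤ 2 * L - 1,
            Antitone (μ α) ∧ (∀ i, 0 ≤ μ α i) ∧
            ∃ g : (Fin α → Fin d) → ℕ, Function.Injective g ∧
              (∀ x, μ α (g x) = (hH α (by omega)).eigenvalues x) ∧
              (∀ i, i ∉ Set.range g → μ α i = 0)) →
          (∀ α : ℕ, 1 ≤ α → α ≤ 2 * L - 1 →
            (1 / (1 - a)) * Real.log (∑' i, μ α i ^ a) ≤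
              k * (1 + 1 / a) * Real.log L + c₀) →
          ∃ ψD : (Fin (2 * L) → Fin d) → ℂ,
            IsMPS (⌈C * (L : ℝ) ^ (2 * a / (1 - a)) * (L : ℝ) ^ (k * (1 + a) / a)⌉₊) ψD ∧
            ∑ c, Complex.normSq (ψ c - ψD c) ≤ ε₀ / L := by
  obtain ⟨C, hC, h⟩ := mps_polynomial_bond_dimension_general ha0 ha1 c₀ hε₀
  exact ⟨C, hC, fun L hL ψ _ _ μ hμ hS => h k d L hL ψ μ
    (fun α h0 hα => hμ α ⟨h0, Nat.le_sub_one_of_lt hα⟩)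
    fun α h0 hα => hS α h0 (Nat.le_sub_one_of_lt hα)⟩
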